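/- Let K be a field and n ≥ 1. Then every maximal ideal of the polynomial ring K[X₁, …, Xₙ] in n variables, regarded as an ideal of (K[X₁, …, X_{n-1}])[Xₙ], is power stable over the integral domain R = K[X₁, …, X_{n-1}]; that is, for every maximal ideal M of R[X] and all t ≥ 1, M^t ∩ R = (M ∩ R)^t. -/

import Mathlib

open Polynomial

/-- An ideal `I` of `R[X]` is power stable if for all `t ≥ 1`,
`I^t ∩ R = (I ∩ R)^t`, intersections with `R` meaning contraction along `C : R →+* R[X]`. -/
def IsPowerStable {R : Type*} [CommRing R] (I : Ideal R[X]) : Prop :=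
  ∀ t : ℕ, 1 ≤ t →
    (I ^ t).comap (C : R →+* R[X]) = (I.comap (C : R →+* R[X])) ^ t

/-!
If `L` is an ideal of `R[X]` such that `R[X] ⧸ L` is faithfully flat over `R`, then `J R[X] + L`
contracts to `J` for every ideal `J` of `R`; since `(J R[X] + L) ^ t ≤ J ^ t R[X] + L`, the ideal
`J R[X] + L` is power stable. This applies to `L = 0`, and to `L = (f)` with `f ≠ 1` monic, where
the quotient is free.

An ideal `I` whose contraction `m` is maximal has this form with `J = m`: its image in the principal
ideal ring `(R ⧸ m)[X]` is zero or generated by a monic polynomial, which lifts to a monic `f`.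
If `R` is a Jacobson ring, every maximal ideal of `R[X]` has a maximal contraction.
-/

theorem sup_pow_le_pow_sup {A : Type*} [CommSemiring A] (I J : Ideal A) (t : ℕ) :
    (I ⊔ J) ^ t ≤ I ^ t ⊔ J := by
  induction t with
  | zero => simp only [pow_zero, Ideal.one_eq_top, top_sup_eq, le_refl]
  | succ t ih =>
    calc (I ⊔ J) ^ (t + 1) ≤ (I ^ t ⊔ J) * (I ⊔ J) := by
          rw [pow_succ]
          exact Ideal.mul_mono_left ih
      _ = I ^ (t + 1) ⊔ J * I ⊔ (I ^ t ⊔ J) * J := by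
          rw [Ideal.mul_sup, Ideal.sup_mul, pow_succ]
      _ ≤ I ^ (t + 1) ⊔ J :=
          sup_le (sup_le_sup_left Ideal.mul_le_left _) (le_sup_of_le_right Ideal.mul_le_right)

section CommRing

variable {R : Type*} [CommRing R]

theorem comap_C_map_C_sup (J : Ideal R) (L : Ideal R[X]) [Module.FaithfullyFlat R (R[X] ⧸ L)] :
    (J.map (C : R →+* R[X]) ⊔ L).comap C = J := by
  conv_lhs => rw [← Ideal.mk_ker (I := L),
    ← Ideal.comap_map_of_surjective' _ Ideal.Quotient.mk_surjective, Ideal.comap_comap,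
    Ideal.map_map]
  exact Ideal.comap_map_eq_self_of_faithfullyFlat (B := R[X] ⧸ L) J

theorem IsPowerStable.map_C_sup (J : Ideal R) (L : Ideal R[X])
    [Module.FaithfullyFlat R (R[X] ⧸ L)] : IsPowerStable (J.map C ⊔ L) := by
  intro t _
  refine le_antisymm ?_ (Ideal.le_comap_pow _ t)
  calc ((J.map C ⊔ L) ^ t).comap C ≤ ((J ^ t).map C ⊔ L).comap C := by
        rw [Ideal.map_pow]
        exact Ideal.comap_mono (sup_pow_le_pow_sup _ _ t)
    _ = ((J.map C ⊔ L).comap C) ^ t := by simp only [comap_C_map_C_sup]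

theorem IsPowerStable.map_C (J : Ideal R) : IsPowerStable (J.map C) := by
  obtain _ | _ := subsingleton_or_nontrivial R
  · exact fun _ _ ↦ Subsingleton.elim _ _
  have : Module.FaithfullyFlat R (R[X] ⧸ (⊥ : Ideal R[X])) :=
    .of_linearEquiv _ _ (AlgEquiv.quotientBot R R[X]).toLinearEquiv
  simpa only [sup_bot_eq] using IsPowerStable.map_C_sup J ⊥

theorem IsPowerStable.map_C_sup_span_singleton (J : Ideal R) {f : R[X]} (hf : f.Monic) :
    IsPowerStable (J.map C ⊔ Ideal.span {f}) := by
  obtain _ | _ := subsingleton_or_nontrivial R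
  · exact fun _ _ ↦ Subsingleton.elim _ _
  obtain rfl | hf_one := eq_or_ne f 1
  · intro t _
    simp only [Ideal.span_singleton_one, sup_top_eq, Ideal.top_pow, Ideal.comap_top]
  · have : Module.Free R (R[X] ⧸ Ideal.span {f}) := hf.free_quotient
    have : Nontrivial (R[X] ⧸ Ideal.span {f}) := by
      rwa [Ideal.Quotient.nontrivial_iff, Ne, Ideal.span_singleton_eq_top, hf.isUnit_iff]
    exact .map_C_sup J _

theorem exists_zero_or_monic_span_singleton_eq {k : Type*} [Field k] (I : Ideal k[X]) :
    ∃ g : k[X], (g = 0 ∨ g.Monic) ∧ Ideal.span {g} = I := by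
  classical
  let g := Submodule.IsPrincipal.generator I
  refine ⟨normalize g, ?_, ?_⟩
  · rw [normalize_eq_zero]
    exact or_iff_not_imp_left.mpr monic_normalize
  · rw [Ideal.span_singleton_eq_span_singleton.mpr (normalize_associated g),
      Ideal.span_singleton_generator]

theorem exists_zero_or_monic_map_C_sup_span_singleton_eq {m : Ideal R} [m.IsMaximal]
    {I : Ideal R[X]} (hmI : m.map C ≤ I) :
    ∃ f : R[X], (f = 0 ∨ f.Monic) ∧ m.map C ⊔ Ideal.span {f} = I := by
  let _ : Field (R ⧸ m) := Ideal.Quotient.field m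
  let φ : R[X] →+* (R ⧸ m)[X] := mapRingHom (Ideal.Quotient.mk m)
  have hφ : Function.Surjective φ := map_surjective _ Ideal.Quotient.mk_surjective
  have hker : RingHom.ker φ = m.map C := by rw [ker_mapRingHom, Ideal.mk_ker]
  have eq_of_map_eq (f : R[X]) (hf : Ideal.span {φ f} = I.map φ) :
      m.map C ⊔ Ideal.span {f} = I := by
    calc m.map C ⊔ Ideal.span {f} = ((Ideal.span {f}).map φ).comap φ := by
          rw [Ideal.comap_map_of_surjective' φ hφ, hker, sup_comm]
      _ = (I.map φ).comap φ := by rw [Ideal.map_span, Set.image_singleton, hf]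
      _ = I := by rw [Ideal.comap_map_of_surjective' φ hφ, hker, sup_eq_left.mpr hmI]
  obtain ⟨g, rfl | hg, hspan⟩ := exists_zero_or_monic_span_singleton_eq (I.map φ)
  · exact ⟨0, .inl rfl, eq_of_map_eq 0 (by rw [map_zero, hspan])⟩
  · obtain ⟨f, rfl, -, hf⟩ := lifts_and_natDegree_eq_and_monic ((mem_lifts _).mpr (hφ g)) hg
    exact ⟨f, .inr hf, eq_of_map_eq f hspan⟩

theorem IsPowerStable.of_isMaximal_comap_C {I : Ideal R[X]}
    (hI : (I.comap (C : R →+* R[X])).IsMaximal) : IsPowerStable I := by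
  obtain ⟨f, rfl | hf, hI_eq⟩ :=
    exists_zero_or_monic_map_C_sup_span_singleton_eq (I := I) Ideal.map_comap_le
  · rw [← hI_eq, Ideal.span_singleton_zero, sup_bot_eq]
    exact .map_C _
  · rw [← hI_eq]
    exact .map_C_sup_span_singleton _ hf

end CommRing

theorem stmt_11_general {R : Type*} [CommRing R] [IsJacobsonRing R] (M : Ideal R[X])
    [M.IsMaximal] : IsPowerStable M :=
  .of_isMaximal_comap_C (isMaximal_comap_C_of_isJacobsonRing M)

theorem stmt_11 (K : Type*) [Field K] (n : ℕ) (hn : 1 ≤ n)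
    (M : Ideal (MvPolynomial (Fin (n - 1)) K)[X]) (hM : M.IsMaximal) :
    IsPowerStable M :=
  stmt_11_general M
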